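/- Let M_X, M_Y and D_X be the ℂ-linear endomorphisms of the polynomial ring ℂ[X,Y] given by multiplication by X, multiplication by Y, and the formal partial derivative with respect to X. For a B-diagram G set P(G) = M_X^{h_f↓(G)} ∘ D_X^{h_f↑(G)} ∘ M_Y^{h_c(G)}, and extend P to a ℂ-linear map from ℬ to the endomorphism algebra of ℂ[X,Y]. Then P is a morphism of unital ℂ-algebras: P(u ⋆ v) = P(u) ∘ P(v) for all u, v ∈ ℬ, and P(ε) is the identity. -/

import Mathlib

open scoped BigOperators

structure BD where
  lam : List ℕ
  up : Finset ℕ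
  dn : Finset ℕ
  ed : Finset (ℕ × ℕ)
deriving DecidableEq

namespace BD

/-- number of vertices -/
def nv (G : BD) : ℕ := G.lam.length

/-- number of half-edges -/
def omega (G : BD) : ℕ := G.lam.sum

/-- the vertex to which a half-edge belongs -/
def v (G : BD) (k : ℕ) : ℕ :=
  (List.range G.lam.length).countP (fun i => (G.lam.take i).sum < k)

def Valid (G : BD) : Prop :=
  (∀ x ∈ G.lam, 0 < x) ∧
  G.up ⊆ Finset.Icc 1 G.omega ∧
  G.dn ⊆ Finset.Icc 1 G.omega ∧
  (∀ p ∈ G.ed, p.1 ∈ G.up ∧ p.2 ∈ G.dn ∧ G.v p.1 < G.v p.2) ∧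
  (∀ p ∈ G.ed, ∀ q ∈ G.ed, p.1 = q.1 → p = q) ∧
  (∀ p ∈ G.ed, ∀ q ∈ G.ed, p.2 = q.2 → p = q)

def eps : BD := ⟨[], ∅, ∅, ∅⟩

theorem eps_valid : eps.Valid := by
  refine ⟨?_, ?_, ?_, ?_, ?_, ?_⟩ <;> simp [eps, Valid, omega]

def HfUp (G : BD) : Finset ℕ := G.up \ G.ed.image Prod.fst
def HfDn (G : BD) : Finset ℕ := G.dn \ G.ed.image Prod.snd
def hfUp (G : BD) : ℕ := G.HfUp.card
def hfDn (G : BD) : ℕ := G.HfDn.card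
def hc (G : BD) : ℕ :=
  (G.omega - G.ed.card - G.hfUp) + (G.omega - G.ed.card - G.hfDn)

/-- composition of `G'` over `G` along a matching `s` -/
def comp (G G' : BD) (s : Finset (ℕ × ℕ)) : BD where
  lam := G.lam ++ G'.lam
  up := G.up ∪ G'.up.image (· + G.omega)
  dn := G.dn ∪ G'.dn.image (· + G.omega)
  ed := G.ed ∪ s.image (fun p => (p.1, p.2 + G.omega)) ∪
        G'.ed.image (fun p => (p.1 + G.omega, p.2 + G.omega))

/-- `s` encodes a strictly increasing sequence `a₁ < ⋯ < a_k` of elements of `H_f↑(G)`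
matched with pairwise distinct elements `b₁,…,b_k` of `H_f↓(G')`. -/
def Matching (G G' : BD) (s : Finset (ℕ × ℕ)) : Prop :=
  (∀ p ∈ s, p.1 ∈ G.HfUp ∧ p.2 ∈ G'.HfDn) ∧
  (∀ p ∈ s, ∀ q ∈ s, p.1 = q.1 → p = q) ∧
  (∀ p ∈ s, ∀ q ∈ s, p.2 = q.2 → p = q)

open scoped Classical in
noncomputable def matchings (G G' : BD) : Finset (Finset (ℕ × ℕ)) :=
  (G.HfUp ×ˢ G'.HfDn).powerset.filter (fun s => Matching G G' s)

/-- juxtaposition -/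
def juxt (G G' : BD) : BD := comp G G' ∅

def Indiv (G : BD) : Prop :=
  ∀ G₁ G₂ : BD, G₁.Valid → G₂.Valid → G = juxt G₁ G₂ → G₁ = G ∨ G₂ = G

/-- half-edges attached to the vertices in `I` -/
def HI (G : BD) (I : Finset ℕ) : Finset ℕ :=
  (Finset.Icc 1 G.omega).filter (fun k => G.v k ∈ I)

/-- the increasing relabelling bijection -/
def phi (G : BD) (I : Finset ℕ) (k : ℕ) : ℕ := ((G.HI I).filter (· ≤ k)).card

/-- sub-B-diagram on the set of vertices `I` -/
def sub (G : BD) (I : Finset ℕ) : BD where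
  lam := ((List.range G.lam.length).filter (fun i => i + 1 ∈ I)).map (fun i => G.lam.getD i 0)
  up := (G.up ∩ G.HI I).image (G.phi I)
  dn := (G.dn ∩ G.HI I).image (G.phi I)
  ed := (G.ed.filter (fun p => G.v p.1 ∈ I ∧ G.v p.2 ∈ I)).image
          (fun p => (G.phi I p.1, G.phi I p.2))

def Isolated (G : BD) (I : Finset ℕ) : Prop :=
  ∀ p ∈ G.ed, (G.v p.1 ∈ I ↔ G.v p.2 ∈ I)

def Connected (G : BD) : Prop :=
  ∀ i j : ℕ, 1 ≤ i → i < j → j ≤ G.nv →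
    ∃ (k : ℕ) (c : Fin (k + 1) → ℕ × ℕ),
      (∀ ℓ, c ℓ ∈ G.ed) ∧
      (i = G.v (c 0).1 ∨ i = G.v (c 0).2) ∧
      (j = G.v (c (Fin.last k)).1 ∨ j = G.v (c (Fin.last k)).2) ∧
      ∀ ℓ : Fin k,
        G.v (c ℓ.castSucc).1 = G.v (c ℓ.succ).1 ∨ G.v (c ℓ.castSucc).1 = G.v (c ℓ.succ).2 ∨
        G.v (c ℓ.castSucc).2 = G.v (c ℓ.succ).1 ∨ G.v (c ℓ.castSucc).2 = G.v (c ℓ.succ).2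

def IsConnComp (G : BD) (I : Finset ℕ) : Prop :=
  I ⊆ Finset.Icc 1 G.nv ∧ I.Nonempty ∧ (G.sub I).Connected ∧
  ∀ J : Finset ℕ, I ⊆ J → J ⊆ Finset.Icc 1 G.nv → (G.sub J).Connected → J = I

end BD

open scoped TensorProduct

/-- B-diagrams -/
abbrev BDiagram := {G : BD // G.Valid}

/-- the free `ℂ`-vector space on the set of B-diagrams -/
abbrev BSpace := BDiagram →₀ ℂ

open scoped Classical in
noncomputable def mkB (G : BD) : BSpace :=
  if h : G.Valid then Finsupp.single ⟨G, h⟩ 1 else 0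

noncomputable def unitB : BSpace := Finsupp.single ⟨BD.eps, BD.eps_valid⟩ 1

noncomputable def liftB {V : Type*} [AddCommMonoid V] [Module ℂ V] (f : BDiagram → V) :
    BSpace →ₗ[ℂ] V :=
  Finsupp.lsum ℂ fun A => LinearMap.toSpanSingleton ℂ V (f A)

noncomputable def mulfun (A B : BDiagram) : BSpace :=
  ∑ s ∈ BD.matchings A.1 B.1, mkB (BD.comp A.1 B.1 s)

/-- the product ⋆ of the algebra of B-diagrams, as a bilinear map -/
noncomputable def starB : BSpace →ₗ[ℂ] BSpace →ₗ[ℂ] BSpace :=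
  liftB fun A => liftB fun B => mulfun A B

open scoped Classical in
/-- the coproduct evaluated on a B-diagram -/
noncomputable def dfun (A : BDiagram) : BSpace ⊗[ℂ] BSpace :=
  ∑ I ∈ (Finset.Icc 1 A.1.nv).powerset.filter (fun I => A.1.Isolated I),
    mkB (A.1.sub I) ⊗ₜ[ℂ] mkB (A.1.sub (Finset.Icc 1 A.1.nv \ I))

/-- the coproduct Δ of ℬ -/
noncomputable def deltaL : BSpace →ₗ[ℂ] BSpace ⊗[ℂ] BSpace := liftB dfun

/-- the counit of ℬ -/
noncomputable def counitB : BSpace →ₗ[ℂ] ℂ :=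
  liftB fun A => if A.1 = BD.eps then (1 : ℂ) else 0

/-- multiplication by X on ℂ[X,Y] -/
noncomputable def mX : Module.End ℂ (MvPolynomial (Fin 2) ℂ) :=
  LinearMap.mulLeft ℂ (MvPolynomial.X 0)

/-- multiplication by Y on ℂ[X,Y] -/
noncomputable def mY : Module.End ℂ (MvPolynomial (Fin 2) ℂ) :=
  LinearMap.mulLeft ℂ (MvPolynomial.X 1)

/-- the formal partial derivative ∂/∂X on ℂ[X,Y] -/
noncomputable def dX : Module.End ℂ (MvPolynomial (Fin 2) ℂ) :=
  (MvPolynomial.pderiv 0).toLinearMap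

/-- `P(G) = M_X^{h_f↓(G)} ∘ D_X^{h_f↑(G)} ∘ M_Y^{h_c(G)}` -/
noncomputable def PEnd : BSpace →ₗ[ℂ] Module.End ℂ (MvPolynomial (Fin 2) ℂ) :=
  liftB fun A => mX ^ A.1.hfDn * dX ^ A.1.hfUp * mY ^ A.1.hc

namespace BDaux

open scoped Classical in
noncomputable def MM (U V : Finset ℕ) : Finset (Finset (ℕ × ℕ)) :=
  (U ×ˢ V).powerset.filter (fun s =>
    (∀ p ∈ s, ∀ q ∈ s, p.1 = q.1 → p = q) ∧ (∀ p ∈ s, ∀ q ∈ s, p.2 = q.2 → p = q))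

theorem mem_MM {U V : Finset ℕ} {s : Finset (ℕ × ℕ)} : s ∈ MM U V ↔
    (∀ p ∈ s, p.1 ∈ U ∧ p.2 ∈ V) ∧
    (∀ p ∈ s, ∀ q ∈ s, p.1 = q.1 → p = q) ∧ (∀ p ∈ s, ∀ q ∈ s, p.2 = q.2 → p = q) := by
  simp only [MM, Finset.mem_filter, Finset.mem_powerset]
  refine and_congr_left fun _ => ?_
  constructor
  · intro h p hp
    exact Finset.mem_product.1 (h hp)
  · intro h p hp
    exact Finset.mem_product.2 (h p hp)

open scoped Classical in
theorem matchings_eq (G G' : BD) : BD.matchings G G' = MM G.HfUp G'.HfDn := by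
  ext s
  rw [mem_MM]
  unfold BD.matchings
  rw [Finset.mem_filter, Finset.mem_powerset]
  unfold BD.Matching
  constructor
  · exact fun h => h.2
  · intro h
    exact ⟨fun p hp => Finset.mem_product.2 (h.1 p hp), h⟩

theorem card_le {U V : Finset ℕ} {s : Finset (ℕ × ℕ)} (h : s ∈ MM U V) :
    s.card ≤ U.card ∧ s.card ≤ V.card := by
  rw [mem_MM] at h
  exact ⟨Finset.card_le_card_of_injOn Prod.fst (fun p hp => (h.1 p hp).1)
      (fun p hp q hq e => h.2.1 p hp q hq e),
    Finset.card_le_card_of_injOn Prod.snd (fun p hp => (h.1 p hp).2)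
      (fun p hp q hq e => h.2.2 p hp q hq e)⟩

theorem MM_insert {u : ℕ} {U V : Finset ℕ} (hu : u ∉ U) :
    MM (insert u U) V = MM U V ∪
      V.biUnion (fun v => (MM U (V.erase v)).image (fun s => insert (u, v) s)) := by
  ext s
  simp only [Finset.mem_union, Finset.mem_biUnion, Finset.mem_image]
  constructor
  · intro hs
    rw [mem_MM] at hs
    by_cases h : ∃ v, (u, v) ∈ s
    · obtain ⟨v, hv⟩ := h
      right
      refine ⟨v, (hs.1 _ hv).2, s.erase (u, v), ?_, Finset.insert_erase hv⟩
      rw [mem_MM]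
      refine ⟨?_, fun p hp q hq => hs.2.1 p (Finset.mem_of_mem_erase hp) q
        (Finset.mem_of_mem_erase hq), fun p hp q hq => hs.2.2 p (Finset.mem_of_mem_erase hp) q
        (Finset.mem_of_mem_erase hq)⟩
      intro p hp
      obtain ⟨hne, hp⟩ := Finset.mem_erase.1 hp
      have h1 := hs.1 p hp
      refine ⟨?_, ?_⟩
      · rcases Finset.mem_insert.1 h1.1 with h2 | h2
        · exact absurd (hs.2.1 p hp _ hv h2) hne
        · exact h2
      · refine Finset.mem_erase.2 ⟨fun h2 => hne (hs.2.2 p hp _ hv h2), h1.2⟩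
    · left
      rw [mem_MM]
      refine ⟨fun p hp => ⟨?_, (hs.1 p hp).2⟩, hs.2⟩
      rcases Finset.mem_insert.1 (hs.1 p hp).1 with h2 | h2
      · exact absurd ⟨p.2, by rw [← h2]; exact hp⟩ h
      · exact h2
  · rintro (hs | ⟨v, hv, t, ht, rfl⟩)
    · rw [mem_MM] at hs ⊢
      exact ⟨fun p hp => ⟨Finset.mem_insert_of_mem (hs.1 p hp).1, (hs.1 p hp).2⟩, hs.2⟩
    · rw [mem_MM] at ht ⊢
      obtain ⟨h1, h2, h3⟩ := ht
      refine ⟨?_, ?_, ?_⟩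
      · intro p hp
        rcases Finset.mem_insert.1 hp with rfl | hp
        · exact ⟨Finset.mem_insert_self _ _, hv⟩
        · exact ⟨Finset.mem_insert_of_mem (h1 p hp).1, Finset.mem_of_mem_erase (h1 p hp).2⟩
      · intro p hp q hq e
        rcases Finset.mem_insert.1 hp with rfl | hp <;>
          rcases Finset.mem_insert.1 hq with rfl | hq
        · rfl
        · exact absurd (by have := (h1 q hq).1; rw [← e] at this; exact this) hu
        · exact absurd (by have := (h1 p hp).1; rw [e] at this; exact this) hu
        · exact h2 p hp q hq e
      · intro p hp q hq e
        rcases Finset.mem_insert.1 hp with rfl | hp <;>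
          rcases Finset.mem_insert.1 hq with rfl | hq
        · rfl
        · exact absurd e.symm (Finset.mem_erase.1 (h1 q hq).2).1
        · exact absurd e (Finset.mem_erase.1 (h1 p hp).2).1
        · exact h3 p hp q hq e

theorem not_mem_of_MM {u v : ℕ} {U V : Finset ℕ} (hu : u ∉ U) {s : Finset (ℕ × ℕ)}
    (h : s ∈ MM U V) : (u, v) ∉ s := fun h' => hu ((mem_MM.1 h).1 _ h').1

theorem comm_pow {R : Type*} [Ring R] {x d : R} (h : d * x = x * d + 1) (n : ℕ) :
    d * x ^ n = x ^ n * d + (n : R) * x ^ (n - 1) := by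
  induction n with
  | zero => simp
  | succ n ih =>
    rw [pow_succ, ← mul_assoc, ih, add_mul, mul_assoc, h, mul_add, mul_one, ← mul_assoc]
    rcases n with _ | n
    · simp
    · simp only [Nat.add_sub_cancel, mul_assoc, ← pow_succ, Nat.cast_add, Nat.cast_one, add_mul,
        one_mul]
      abel

theorem normal_order {R : Type*} [Ring R] {x d : R} (h : d * x = x * d + 1) (U : Finset ℕ) :
    ∀ V : Finset ℕ, ∑ s ∈ MM U V, x ^ (V.card - s.card) * d ^ (U.card - s.card)
      = d ^ U.card * x ^ V.card := by
  induction U using Finset.induction_on with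
  | empty =>
    intro V
    have : MM ∅ V = {∅} := by
      ext s
      rw [mem_MM, Finset.mem_singleton]
      constructor
      · intro h
        exact Finset.eq_empty_of_forall_notMem fun p hp => by simpa using (h.1 p hp).1
      · rintro rfl
        simp
    simp [this]
  | insert u U hu ih =>
    intro V
    rw [MM_insert hu, Finset.sum_union, Finset.sum_biUnion]
    · have h1 : ∀ v ∈ V, ∑ s ∈ (MM U (V.erase v)).image (fun s => insert (u, v) s),
          x ^ (V.card - s.card) * d ^ ((insert u U).card - s.card)
            = d ^ U.card * x ^ (V.card - 1) := by
        intro v hv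
        rw [Finset.sum_image]
        · rw [← Finset.card_erase_of_mem hv, ← ih]
          refine Finset.sum_congr rfl fun s hs => ?_
          rw [Finset.card_insert_of_notMem (not_mem_of_MM hu hs),
            Finset.card_insert_of_notMem hu, Finset.card_erase_of_mem hv]
          congr 2 <;> omega
        · intro s hs t ht e
          have e' := congrArg (fun z => Finset.erase z (u, v)) e
          simpa [Finset.erase_insert (not_mem_of_MM hu hs),
            Finset.erase_insert (not_mem_of_MM hu ht)] using e'
      rw [Finset.sum_congr rfl h1, Finset.sum_const]
      have h2 : ∑ s ∈ MM U V, x ^ (V.card - s.card) * d ^ ((insert u U).card - s.card)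
          = d ^ U.card * x ^ V.card * d := by
        rw [← ih, Finset.sum_mul]
        refine Finset.sum_congr rfl fun s hs => ?_
        have := (card_le hs).1
        rw [Finset.card_insert_of_notMem hu, mul_assoc, ← pow_succ]
        congr 2
        omega
      rw [h2, Finset.card_insert_of_notMem hu, pow_succ, mul_assoc, mul_assoc, comm_pow h, mul_add,
        nsmul_eq_mul, ← mul_assoc (d ^ U.card) (V.card : R), ← Nat.cast_comm, mul_assoc]
    · intro v _ w _ hvw
      refine Finset.disjoint_left.2 fun s hs ht => ?_
      obtain ⟨s1, hs1, rfl⟩ := Finset.mem_image.1 hs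
      obtain ⟨t1, ht1, e⟩ := Finset.mem_image.1 ht
      have : (u, v) ∈ insert (u, w) t1 := by rw [e]; exact Finset.mem_insert_self _ _
      rcases Finset.mem_insert.1 this with h' | h'
      · exact hvw (Prod.ext_iff.1 h').2
      · exact not_mem_of_MM hu ht1 h'
    · refine Finset.disjoint_left.2 fun s hs ht => ?_
      obtain ⟨v, hv, ht⟩ := Finset.mem_biUnion.1 ht
      obtain ⟨t1, ht1, rfl⟩ := Finset.mem_image.1 ht
      exact not_mem_of_MM hu hs (Finset.mem_insert_self _ _)

theorem omega_comp (G G' : BD) (s : Finset (ℕ × ℕ)) :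
    (G.comp G' s).omega = G.omega + G'.omega := by
  simp [BD.comp, BD.omega]

theorem v_le (G : BD) (k : ℕ) : G.v k ≤ G.lam.length := by
  have := List.countP_le_length (p := fun i => decide ((G.lam.take i).sum < k))
    (l := List.range G.lam.length)
  simpa [BD.v] using this

theorem v_pos (G : BD) (k : ℕ) (hk : 1 ≤ k) (hk' : k ≤ G.omega) : 1 ≤ G.v k := by
  have hl : 0 < G.lam.length := by
    rcases G with ⟨l, _, _, _⟩
    rcases l with _ | ⟨a, l⟩
    · simp [BD.omega] at hk'; omega
    · simp
  unfold BD.v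
  refine List.countP_pos_iff.2 ⟨0, by simpa using hl, decide_eq_true (by simpa using (show 0 < k from hk))⟩

theorem v_comp (G G' : BD) (s : Finset (ℕ × ℕ)) (k : ℕ) :
    (G.comp G' s).v k = (List.range G.lam.length).countP (fun i => (G.lam.take i).sum < k)
      + (List.range G'.lam.length).countP (fun i => G.omega + (G'.lam.take i).sum < k) := by
  have hl : (G.comp G' s).lam = G.lam ++ G'.lam := rfl
  rw [BD.v, hl, List.length_append, List.range_add, List.countP_append, List.countP_map]
  congr 1
  · refine List.countP_congr fun i hi => ?_
    have hi := List.mem_range.1 hi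
    simp only [decide_eq_true_eq, List.take_append_of_le_length hi.le]
  · refine List.countP_congr fun i hi => ?_
    have ho : G.omega = G.lam.sum := rfl
    simp only [Function.comp, decide_eq_true_eq, ho, List.take_length_add_append,
      List.sum_append]

theorem v_comp_left (G G' : BD) (s : Finset (ℕ × ℕ)) (k : ℕ) (hk : k ≤ G.omega) :
    (G.comp G' s).v k = G.v k := by
  rw [v_comp, BD.v]
  rw [Nat.add_eq_left, List.countP_eq_zero]
  intro i _
  simp
  omega

theorem v_comp_right (G G' : BD) (s : Finset (ℕ × ℕ)) (k : ℕ) (hk : 1 ≤ k) :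
    (G.comp G' s).v (k + G.omega) = G.lam.length + G'.v k := by
  rw [v_comp, BD.v]
  congr 1
  · have : (List.range G.lam.length).length = G.lam.length := List.length_range
    conv_rhs => rw [← this]
    rw [List.countP_eq_length]
    intro i _
    have : (G.lam.take i).sum ≤ G.omega := by
      conv_rhs => rw [BD.omega, ← List.take_append_drop i G.lam, List.sum_append]
      omega
    simp
    omega
  · refine List.countP_congr fun i hi => ?_
    simp
    omega

section
variable {G G' : BD} {s : Finset (ℕ × ℕ)}

theorem up_le (h : G.Valid) {a : ℕ} (ha : a ∈ G.up) : 1 ≤ a ∧ a ≤ G.omega :=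
  Finset.mem_Icc.1 (h.2.1 ha)

theorem dn_le (h : G.Valid) {a : ℕ} (ha : a ∈ G.dn) : 1 ≤ a ∧ a ≤ G.omega :=
  Finset.mem_Icc.1 (h.2.2.1 ha)

theorem mem_ed_comp {p : ℕ × ℕ} : p ∈ (G.comp G' s).ed ↔ p ∈ G.ed ∨
    (∃ q ∈ s, p.1 = q.1 ∧ p.2 = q.2 + G.omega) ∨
    (∃ q ∈ G'.ed, p.1 = q.1 + G.omega ∧ p.2 = q.2 + G.omega) := by
  simp only [BD.comp, Finset.mem_union, Finset.mem_image, or_assoc, Prod.ext_iff]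
  grind

theorem mem_HfUp {a : ℕ} : a ∈ G.HfUp ↔ a ∈ G.up ∧ ∀ p ∈ G.ed, p.1 ≠ a := by
  simp only [BD.HfUp, Finset.mem_sdiff, Finset.mem_image, not_exists, not_and, ne_eq]

theorem mem_HfDn {a : ℕ} : a ∈ G.HfDn ↔ a ∈ G.dn ∧ ∀ p ∈ G.ed, p.2 ≠ a := by
  simp only [BD.HfDn, Finset.mem_sdiff, Finset.mem_image, not_exists, not_and, ne_eq]

theorem comp_valid (h : G.Valid) (h' : G'.Valid) (hs : s ∈ MM G.HfUp G'.HfDn) :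
    (G.comp G' s).Valid := by
  obtain ⟨s1, s2, s3⟩ := mem_MM.1 hs
  have eG := h.2.2.2.1
  have eG' := h'.2.2.2.1
  refine ⟨?_, ?_, ?_, ?_, ?_, ?_⟩
  · intro x hx
    rcases List.mem_append.1 hx with hx | hx
    · exact h.1 x hx
    · exact h'.1 x hx
  · intro a ha
    rw [omega_comp, Finset.mem_Icc]
    rcases Finset.mem_union.1 ha with ha | ha
    · have := up_le h ha; omega
    · obtain ⟨b, hb, rfl⟩ := Finset.mem_image.1 ha
      have := up_le h' hb
      omega
  · intro a ha
    rw [omega_comp, Finset.mem_Icc]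
    rcases Finset.mem_union.1 ha with ha | ha
    · have := dn_le h ha; omega
    · obtain ⟨b, hb, rfl⟩ := Finset.mem_image.1 ha
      have := dn_le h' hb
      omega
  · intro p hp
    rcases mem_ed_comp.1 hp with hp | ⟨q, hq, e1, e2⟩ | ⟨q, hq, e1, e2⟩
    · obtain ⟨a1, a2, a3⟩ := eG p hp
      refine ⟨Finset.mem_union_left _ a1, Finset.mem_union_left _ a2, ?_⟩
      rw [v_comp_left _ _ _ _ (up_le h a1).2, v_comp_left _ _ _ _ (dn_le h a2).2]
      exact a3
    · obtain ⟨a1, a2⟩ := s1 q hq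
      replace a1 := (mem_HfUp.1 a1).1
      replace a2 := (mem_HfDn.1 a2).1
      rw [e1, e2]
      refine ⟨Finset.mem_union_left _ a1,
        Finset.mem_union_right _ (Finset.mem_image_of_mem _ a2), ?_⟩
      rw [v_comp_left _ _ _ _ (up_le h a1).2, v_comp_right _ _ _ _ (dn_le h' a2).1]
      have := v_le G q.1
      have := v_pos G' q.2 (dn_le h' a2).1 (dn_le h' a2).2
      omega
    · obtain ⟨a1, a2, a3⟩ := eG' q hq
      rw [e1, e2]
      refine ⟨Finset.mem_union_right _ (Finset.mem_image_of_mem _ a1),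
        Finset.mem_union_right _ (Finset.mem_image_of_mem _ a2), ?_⟩
      rw [v_comp_right _ _ _ _ (up_le h' a1).1, v_comp_right _ _ _ _ (dn_le h' a2).1]
      omega
  · intro p hp q hq e
    rcases mem_ed_comp.1 hp with hp | ⟨p', hp, e1, e2⟩ | ⟨p', hp, e1, e2⟩ <;>
    rcases mem_ed_comp.1 hq with hq | ⟨q', hq, f1, f2⟩ | ⟨q', hq, f1, f2⟩
    · exact h.2.2.2.2.1 p hp q hq e
    · exact absurd (by omega) ((mem_HfUp.1 (s1 q' hq).1).2 p hp)
    · have := up_le h (eG p hp).1; have := up_le h' (eG' q' hq).1; omega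
    · exact absurd (by omega) ((mem_HfUp.1 (s1 p' hp).1).2 q hq)
    · have := s2 p' hp q' hq (by omega)
      subst this
      exact Prod.ext e (by omega)
    · have := up_le h (mem_HfUp.1 (s1 p' hp).1).1; have := up_le h' (eG' q' hq).1; omega
    · have := up_le h (eG q hq).1; have := up_le h' (eG' p' hp).1; omega
    · have := up_le h (mem_HfUp.1 (s1 q' hq).1).1; have := up_le h' (eG' p' hp).1; omega
    · have := h'.2.2.2.2.1 p' hp q' hq (by omega)
      subst this
      exact Prod.ext e (by omega)
  · intro p hp q hq e
    rcases mem_ed_comp.1 hp with hp | ⟨p', hp, e1, e2⟩ | ⟨p', hp, e1, e2⟩ <;>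
    rcases mem_ed_comp.1 hq with hq | ⟨q', hq, f1, f2⟩ | ⟨q', hq, f1, f2⟩
    · exact h.2.2.2.2.2 p hp q hq e
    · have := dn_le h (eG p hp).2.1; have := dn_le h' (mem_HfDn.1 (s1 q' hq).2).1; omega
    · have := dn_le h (eG p hp).2.1; have := dn_le h' (eG' q' hq).2.1; omega
    · have := dn_le h (eG q hq).2.1; have := dn_le h' (mem_HfDn.1 (s1 p' hp).2).1; omega
    · have := s3 p' hp q' hq (by omega)
      subst this
      exact Prod.ext (by omega) e
    · exact absurd (by omega) ((mem_HfDn.1 (s1 p' hp).2).2 q' hq)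
    · have := dn_le h (eG q hq).2.1; have := dn_le h' (eG' p' hp).2.1; omega
    · exact absurd (by omega) ((mem_HfDn.1 (s1 q' hq).2).2 p' hp)
    · have := h'.2.2.2.2.2 p' hp q' hq (by omega)
      subst this
      exact Prod.ext (by omega) e

theorem card_up (h : G.Valid) : G.hfUp + G.ed.card = G.up.card := by
  have hc : (G.ed.image Prod.fst).card = G.ed.card :=
    Finset.card_image_of_injOn fun p hp q hq e => h.2.2.2.2.1 p hp q hq e
  rw [BD.hfUp, BD.HfUp, ← hc]
  refine Finset.card_sdiff_add_card_eq_card ?_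
  intro a ha
  obtain ⟨p, hp, rfl⟩ := Finset.mem_image.1 ha
  exact (h.2.2.2.1 p hp).1

theorem card_dn (h : G.Valid) : G.hfDn + G.ed.card = G.dn.card := by
  have hc : (G.ed.image Prod.snd).card = G.ed.card :=
    Finset.card_image_of_injOn fun p hp q hq e => h.2.2.2.2.2 p hp q hq e
  rw [BD.hfDn, BD.HfDn, ← hc]
  refine Finset.card_sdiff_add_card_eq_card ?_
  intro a ha
  obtain ⟨p, hp, rfl⟩ := Finset.mem_image.1 ha
  exact (h.2.2.2.1 p hp).2.1

theorem card_up_le (h : G.Valid) : G.up.card ≤ G.omega := by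
  simpa using Finset.card_le_card h.2.1

theorem card_dn_le (h : G.Valid) : G.dn.card ≤ G.omega := by
  simpa using Finset.card_le_card h.2.2.1

theorem card_up_comp (h : G.Valid) (h' : G'.Valid) :
    (G.comp G' s).up.card = G.up.card + G'.up.card := by
  simp only [BD.comp]
  rw [Finset.card_union_of_disjoint, Finset.card_image_of_injective _ (add_left_injective _)]
  refine Finset.disjoint_left.2 fun a ha hb => ?_
  obtain ⟨b, hb', rfl⟩ := Finset.mem_image.1 hb
  clear hb; rename' hb' => hb
  have := up_le h ha
  have := up_le h' hb
  omega

theorem card_dn_comp (h : G.Valid) (h' : G'.Valid) :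
    (G.comp G' s).dn.card = G.dn.card + G'.dn.card := by
  simp only [BD.comp]
  rw [Finset.card_union_of_disjoint, Finset.card_image_of_injective _ (add_left_injective _)]
  refine Finset.disjoint_left.2 fun a ha hb => ?_
  obtain ⟨b, hb', rfl⟩ := Finset.mem_image.1 hb
  clear hb; rename' hb' => hb
  have := dn_le h ha
  have := dn_le h' hb
  omega

theorem card_ed_comp (h : G.Valid) (h' : G'.Valid) (hs : s ∈ MM G.HfUp G'.HfDn) :
    (G.comp G' s).ed.card = G.ed.card + s.card + G'.ed.card := by
  obtain ⟨s1, s2, s3⟩ := mem_MM.1 hs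
  have eG := h.2.2.2.1
  have eG' := h'.2.2.2.1
  simp only [BD.comp]
  rw [Finset.card_union_of_disjoint, Finset.card_union_of_disjoint, Finset.card_image_of_injective,
    Finset.card_image_of_injective]
  · intro p q e
    simp only [Prod.ext_iff] at e ⊢
    omega
  · intro p q e
    simp only [Prod.ext_iff] at e ⊢
    omega
  · refine Finset.disjoint_left.2 fun a ha hb => ?_
    obtain ⟨b, hb', rfl⟩ := Finset.mem_image.1 hb
    clear hb; rename' hb' => hb
    have := dn_le h (eG _ ha).2.1
    have := dn_le h' (mem_HfDn.1 (s1 b hb).2).1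
    simp only [] at *
    omega
  · refine Finset.disjoint_left.2 fun a ha hb => ?_
    obtain ⟨b, hb', rfl⟩ := Finset.mem_image.1 hb
    clear hb; rename' hb' => hb
    have h3 := up_le h' (eG' b hb).1
    rcases Finset.mem_union.1 ha with ha | ha
    · have := up_le h (eG _ ha).1
      simp only [] at *
      omega
    · obtain ⟨c, hc, e⟩ := Finset.mem_image.1 ha
      have := up_le h (mem_HfUp.1 (s1 c hc).1).1
      simp only [Prod.ext_iff] at e
      omega

theorem comp_counts (h : G.Valid) (h' : G'.Valid) (hs : s ∈ MM G.HfUp G'.HfDn) :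
    (G.comp G' s).hfUp = (G.hfUp - s.card) + G'.hfUp ∧
    (G.comp G' s).hfDn = G.hfDn + (G'.hfDn - s.card) ∧
    (G.comp G' s).hc = G.hc + G'.hc := by
  have hv := comp_valid h h' hs
  have a1 := card_up hv
  have a2 := card_dn hv
  have a3 := card_up h
  have a4 := card_dn h
  have a5 := card_up h'
  have a6 := card_dn h'
  have b1 := card_up_le h
  have b2 := card_dn_le h
  have b3 := card_up_le h'
  have b4 := card_dn_le h'
  rw [card_up_comp h h', card_ed_comp h h' hs] at a1
  rw [card_dn_comp h h', card_ed_comp h h' hs] at a2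
  have c := card_le hs
  have c1 : s.card ≤ G.hfUp := c.1
  have c2 : s.card ≤ G'.hfDn := c.2
  refine ⟨by omega, by omega, ?_⟩
  simp only [BD.hc, omega_comp, card_ed_comp h h' hs]
  omega

end

theorem dX_mX : dX * mX = mX * dX + 1 := by
  refine LinearMap.ext fun p => ?_
  simp [dX, mX, Derivation.leibniz]
  try ring

theorem commute_mY_mX : Commute mY mX := by
  refine LinearMap.ext fun p => ?_
  simp [mY, mX]
  try ring

theorem commute_mY_dX : Commute mY dX := by
  refine LinearMap.ext fun p => ?_
  simp [mY, dX, Derivation.leibniz]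

theorem liftB_single {V : Type*} [AddCommMonoid V] [Module ℂ V] (f : BDiagram → V)
    (A : BDiagram) : liftB f (Finsupp.single A 1) = f A := by
  simp [liftB]

theorem PEnd_mul (A B : BDiagram) : PEnd (mulfun A B) =
    (mX ^ A.1.hfDn * dX ^ A.1.hfUp * mY ^ A.1.hc) *
    (mX ^ B.1.hfDn * dX ^ B.1.hfUp * mY ^ B.1.hc) := by
  have h1 : PEnd (mulfun A B) = ∑ s ∈ MM A.1.HfUp B.1.HfDn,
      mX ^ A.1.hfDn * (mX ^ (B.1.HfDn.card - s.card) * dX ^ (A.1.HfUp.card - s.card)) *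
        (dX ^ B.1.hfUp * mY ^ (A.1.hc + B.1.hc)) := by
    rw [mulfun, map_sum, matchings_eq]
    refine Finset.sum_congr rfl fun s hs => ?_
    have hv := comp_valid A.2 B.2 hs
    obtain ⟨e1, e2, e3⟩ := comp_counts A.2 B.2 hs
    rw [mkB, dif_pos hv, PEnd, liftB_single]
    simp only [e1, e2, e3, pow_add dX, pow_add mX, mul_assoc]
    rfl
  rw [h1, ← Finset.sum_mul, ← Finset.mul_sum, normal_order dX_mX]
  have c1 : Commute (mY ^ A.1.hc) (mX ^ B.1.hfDn * dX ^ B.1.hfUp) :=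
    (commute_mY_mX.pow_pow _ _).mul_right (commute_mY_dX.pow_pow _ _)
  calc _ = mX ^ A.1.hfDn * dX ^ A.1.hfUp *
        ((mX ^ B.1.hfDn * dX ^ B.1.hfUp) * mY ^ A.1.hc) * mY ^ B.1.hc := by
        simp only [pow_add, mul_assoc]; rfl
    _ = _ := by rw [← c1.eq]; simp only [mul_assoc]

end BDaux

/-- the linear extension of `G ↦ M_X^{h_f↓(G)} ∘ D_X^{h_f↑(G)} ∘ M_Y^{h_c(G)}`
is a morphism of unital `ℂ`-algebras from `(ℬ, ⋆)` to the endomorphisms of ℂ[X,Y]. -/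
theorem PEnd_algebra_morphism :
    (∀ u v : BSpace, PEnd (starB u v) = PEnd u * PEnd v) ∧ PEnd unitB = 1 := by
  constructor
  · have key : starB.compr₂ PEnd =
        (LinearMap.mul ℂ (Module.End ℂ (MvPolynomial (Fin 2) ℂ))).compl₁₂ PEnd PEnd := by
      refine Finsupp.lhom_ext' fun A => LinearMap.ext_ring ?_
      refine Finsupp.lhom_ext' fun B => LinearMap.ext_ring ?_
      have := BDaux.PEnd_mul A B
      simp only [LinearMap.comp_apply, LinearMap.compr₂_apply, LinearMap.compl₁₂_apply,
        Finsupp.lsingle_apply, LinearMap.mul_apply', starB, BDaux.liftB_single]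
      rw [this]
      simp only [PEnd, BDaux.liftB_single]
    intro u v
    exact LinearMap.congr_fun (LinearMap.congr_fun key u) v
  · rw [unitB, PEnd, BDaux.liftB_single]
    simp [BD.eps, BD.hfDn, BD.hfUp, BD.hc, BD.HfDn, BD.HfUp, BD.omega]
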